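/- Let L be a lattice. For every x ∈ L, the set δ_L(x) is a compact subset of 𝔐(L) with respect to the topology τ_L. -/

import Mathlib

/-!
By Alexander's subbasis theorem it suffices to refine covers of `deltaL x` by a nonempty family `P`
of sets `deltaL y`. The elements `z` for which `deltaL z` is covered by finitely many members of `P`
form an ideal `J`, because `deltaL` is monotone and `deltaL (z ⊔ w) ⊆ deltaL z ∪ deltaL w`. If `x`
were not in `J`, then `J` would be disjoint from the principal filter of `x`, and these two would
extend to a comaximal pair (`exists_comaximalPair`, by Zorn's lemma). That pair lies in `deltaL x`
but in no `deltaL y` from `P`, since every such `y` belongs to `J`.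
-/

/-- An ideal of a lattice: nonempty, downward closed, closed under finite joins. -/
def IsLatIdeal {L : Type*} [Lattice L] (I : Set L) : Prop :=
  I.Nonempty ∧ (∀ ⦃x y : L⦄, x ≤ y → y ∈ I → x ∈ I) ∧
    ∀ ⦃x : L⦄, x ∈ I → ∀ ⦃y : L⦄, y ∈ I → x ⊔ y ∈ I

/-- A filter of a lattice: nonempty, upward closed, closed under finite meets. -/
def IsLatFilter {L : Type*} [Lattice L] (F : Set L) : Prop :=
  F.Nonempty ∧ (∀ ⦃x y : L⦄, x ≤ y → x ∈ F → y ∈ F) ∧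
    ∀ ⦃x : L⦄, x ∈ F → ∀ ⦃y : L⦄, y ∈ F → x ⊓ y ∈ F

/-- A comaximal pair of a lattice. -/
def IsComaximalPair {L : Type*} [Lattice L] (I F : Set L) : Prop :=
  IsLatIdeal I ∧ IsLatFilter F ∧ I ∩ F = ∅ ∧
    (∀ J : Set L, IsLatIdeal J → I ⊂ J → (J ∩ F).Nonempty) ∧
    (∀ K : Set L, IsLatFilter K → F ⊂ K → (I ∩ K).Nonempty)

/-- 𝔐(L): the set (type) of comaximal pairs of L. -/
abbrev ComaxPairs (L : Type*) [Lattice L] :=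
  {p : Set L × Set L // IsComaximalPair p.1 p.2}

/-- δ_L(x) = {(I,F) ∈ 𝔐(L) : x ∉ I}. -/
def deltaL {L : Type*} [Lattice L] (x : L) : Set (ComaxPairs L) :=
  {p | x ∉ p.1.1}

/-- ε_L(x) = {(I,F) ∈ 𝔐(L) : x ∈ F}. -/
def epsL {L : Type*} [Lattice L] (x : L) : Set (ComaxPairs L) :=
  {p | x ∈ p.1.2}

/-- τ_L : the topology on 𝔐(L) generated by the subbasis {δ_L(x) : x ∈ L}. -/
def tauL (L : Type*) [Lattice L] : TopologicalSpace (ComaxPairs L) :=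
  TopologicalSpace.generateFrom (Set.range (deltaL (L := L)))

/-- σ_L : the topology on 𝔐(L) generated by the subbasis {ε_L(x) : x ∈ L}. -/
def sigmaL (L : Type*) [Lattice L] : TopologicalSpace (ComaxPairs L) :=
  TopologicalSpace.generateFrom (Set.range (epsL (L := L)))

/-- Distributivity of a lattice. -/
def IsDistrib (L : Type*) [Lattice L] : Prop :=
  ∀ x y z : L, x ⊓ (y ⊔ z) = (x ⊓ y) ⊔ (x ⊓ z)

/-- A prime ideal of a lattice. -/
def IsPrimeIdeal {L : Type*} [Lattice L] (P : Set L) : Prop :=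
  IsLatIdeal P ∧ P ≠ Set.univ ∧ ∀ x y : L, x ⊓ y ∈ P → x ∈ P ∨ y ∈ P

/-- The transition function d on subsets of 𝔐(L). -/
def dTrans {L : Type*} [Lattice L] (A : Set (ComaxPairs L)) : Set (ComaxPairs L) :=
  {p | ∀ q : ComaxPairs L, p.1.2 ⊆ q.1.2 → q ∈ A}

/-- The transition function i on subsets of 𝔐(L). -/
def iTrans {L : Type*} [Lattice L] (A : Set (ComaxPairs L)) : Set (ComaxPairs L) :=
  {p | ∃ q ∈ A, p.1.1 ⊆ q.1.1}

/-- Zorn's lemma for ideals disjoint from a given set. It is also applied to the order dual, where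
it speaks about filters. -/
theorem exists_maximal_ideal {L : Type*} [Lattice L] {I A : Set L} (hI : IsLatIdeal I)
    (hIA : I ∩ A = ∅) :
    ∃ M : Set L, I ⊆ M ∧ IsLatIdeal M ∧ M ∩ A = ∅ ∧
      ∀ J : Set L, IsLatIdeal J → M ⊂ J → (J ∩ A).Nonempty := by
  obtain ⟨M, hIM, hM⟩ := zorn_subset_nonempty {J : Set L | IsLatIdeal J ∧ J ∩ A = ∅} (by
    intro c hc hchain hne
    refine ⟨⋃₀ c, ⟨⟨?_, ?_, ?_⟩, ?_⟩, fun s hs => Set.subset_sUnion_of_mem hs⟩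
    · obtain ⟨s, hs⟩ := hne
      obtain ⟨a, ha⟩ := (hc hs).1.1
      exact ⟨a, s, hs, ha⟩
    · rintro a b hab ⟨s, hs, hb⟩
      exact ⟨s, hs, (hc hs).1.2.1 hab hb⟩
    · rintro a ⟨s, hs, ha⟩ b ⟨t, ht, hb⟩
      rcases hchain.total hs ht with h | h
      · exact ⟨t, ht, (hc ht).1.2.2 (h ha) hb⟩
      · exact ⟨s, hs, (hc hs).1.2.2 ha (h hb)⟩
    · rw [Set.eq_empty_iff_forall_notMem]
      rintro a ⟨⟨s, hs, ha⟩, haA⟩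
      exact Set.eq_empty_iff_forall_notMem.1 (hc hs).2 a ⟨ha, haA⟩) I ⟨hI, hIA⟩
  refine ⟨M, hIM, hM.prop.1, hM.prop.2, fun J hJ hMJ => ?_⟩
  by_contra h
  exact hMJ.2 (hM.le_of_ge ⟨hJ, Set.not_nonempty_iff_eq_empty.1 h⟩ hMJ.1)

theorem isLatIdeal_orderDual_iff {L : Type*} [Lattice L] {F : Set L} :
    IsLatIdeal (L := Lᵒᵈ) F ↔ IsLatFilter F :=
  ⟨fun h => ⟨h.1, fun _ _ hxy hx => h.2.1 hxy hx, h.2.2⟩,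
    fun h => ⟨h.1, fun _ _ hxy hx => h.2.1 hxy hx, h.2.2⟩⟩

theorem exists_comaximalPair {L : Type*} [Lattice L] {I F : Set L} (hI : IsLatIdeal I)
    (hF : IsLatFilter F) (hIF : I ∩ F = ∅) :
    ∃ p : ComaxPairs L, I ⊆ p.1.1 ∧ F ⊆ p.1.2 := by
  obtain ⟨M, hIM, hM, hMF, hMmax⟩ := exists_maximal_ideal hI hIF
  obtain ⟨G, hFG, hG, hGM, hGmax⟩ :=
    exists_maximal_ideal (L := Lᵒᵈ) (I := F) (A := M) (isLatIdeal_orderDual_iff.2 hF)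
      ((Set.inter_comm F M).trans hMF)
  refine ⟨⟨(M, G), hM, isLatIdeal_orderDual_iff.1 hG, (Set.inter_comm M G).trans hGM,
    fun J hJ hMJ => ?_, fun K hK hGK => ?_⟩, hIM, hFG⟩
  -- Enlarging the filter from `F` to `G` preserves the maximality of `M`.
  · exact (hMmax J hJ hMJ).mono (Set.inter_subset_inter_right J hFG)
  · obtain ⟨a, haK, haM⟩ := hGmax K (isLatIdeal_orderDual_iff.2 hK) hGK
    exact ⟨a, haM, haK⟩

/-- each δ_L(x) is compact with respect to τ_L. -/
theorem deltaL_isCompact {L : Type*} [Lattice L] (x : L) :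
    @IsCompact (ComaxPairs L) (tauL L) (deltaL x) := by
  let _ := tauL L
  refine isCompact_generateFrom (S := Set.range (deltaL (L := L))) rfl fun P hP hcov => ?_
  rcases P.eq_empty_or_nonempty with rfl | ⟨U, hU⟩
  · exact ⟨∅, subset_rfl, Set.finite_empty, hcov⟩
  let J : Set L := {z | ∃ Q ⊆ P, Q.Finite ∧ deltaL z ⊆ ⋃₀ Q}
  have mem_J : ∀ y : L, deltaL y ∈ P → y ∈ J := fun y hy =>
    ⟨{deltaL y}, Set.singleton_subset_iff.2 hy, Set.finite_singleton _, by simp⟩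
  have hJ : IsLatIdeal J := by
    refine ⟨?_, ?_, ?_⟩
    · obtain ⟨y, rfl⟩ := hP hU
      exact ⟨y, mem_J y hU⟩
    · rintro z y hzy ⟨Q, hQP, hQ, hyQ⟩
      exact ⟨Q, hQP, hQ, fun p hp => hyQ fun hy => hp (p.2.1.2.1 hzy hy)⟩
    · rintro z ⟨Q, hQP, hQ, hzQ⟩ w ⟨R, hRP, hR, hwR⟩
      refine ⟨Q ∪ R, Set.union_subset hQP hRP, hQ.union hR, fun p hp => ?_⟩
      rw [Set.sUnion_union]
      by_cases hz : z ∈ p.1.1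
      · exact Or.inr (hwR fun hw => hp (p.2.1.2.2 hz hw))
      · exact Or.inl (hzQ hz)
  -- The goal is precisely membership of `x` in `J`.
  change x ∈ J
  by_contra hx
  obtain ⟨p, hJp, hxp⟩ := exists_comaximalPair (F := Set.Ici x) hJ
    ⟨⟨x, le_rfl⟩, fun _ _ h h' => le_trans h' h, fun _ h _ h' => le_inf h h'⟩
    (Set.eq_empty_iff_forall_notMem.2 fun y hy => hx (hJ.2.1 hy.2 hy.1))
  have hxI : p ∈ deltaL x := fun h =>
    Set.eq_empty_iff_forall_notMem.1 p.2.2.2.1 x ⟨h, hxp le_rfl⟩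
  obtain ⟨V, hV, hpV⟩ := hcov hxI
  obtain ⟨y, rfl⟩ := hP hV
  exact hpV (hJp (mem_J y hV))
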